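/- Let (X,d,μ) be a metric measure space with μ a doubling measure, let Ω ⊂ X be open with X∖Ω nonempty, and let {B_i = B(x_i,r_i)}_{i∈ℕ} be a Whitney cover of Ω with r_i = d_Ω(x_i)/8, Ω = ∪_i B_i, and Σ_i χ_{6B_i} ≤ N, together with a partition of unity {φ_i}_i such that each φ_i is (L/r_i)-Lipschitz, 0 ≤ φ_i ≤ χ_{2B_i}, and Σ_i φ_i = 1 on Ω. Let δ > 0 and let w be a δ-regularizable weight in Ω which is integrable on each ball B_i, and define the discrete convolution w̃ = Σ_i w_{B_i} φ_i on Ω. Then there exists a constant C₀ ≥ 1, depending only on N and L, such that for each i, the restriction of w̃ to B_i is Lipschitz with constant C₀ δ w_{B_i} / r_i. -/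

import Mathlib

open MeasureTheory Metric Set ENNReal

/-- `ν` is a doubling measure with doubling constant `Cν`:
`0 < ν(B(x,2r)) ≤ Cν · ν(B(x,r)) < ∞` for all `x` and `r > 0`. -/
def IsDoublingWith {Z : Type*} [PseudoMetricSpace Z] [MeasurableSpace Z]
    (ν : Measure Z) (Cν : ℝ) : Prop :=
  ∀ (x : Z) (r : ℝ), 0 < r →
    0 < ν (ball x (2 * r)) ∧
    ν (ball x (2 * r)) ≤ ENNReal.ofReal Cν * ν (ball x r) ∧
    ν (ball x r) < ⊤

/-- `E` is `c`-porous: for every `x` and every `0 < r < diam E` there is `y ∈ B(x,r)`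
with `B(y,cr) ⊆ X∖E`. -/
def IsPorous {X : Type*} [MetricSpace X] (c : ℝ) (E : Set X) : Prop :=
  ∀ (x : X) (r : ℝ), 0 < r → ENNReal.ofReal r < EMetric.diam E →
    ∃ y ∈ ball x r, ball y (c * r) ⊆ Eᶜ

/-- The weight `w` is `δ`-regularizable in `Ω`: whenever `x, x' ∈ Ω` and the balls
`B_x = B(x, d_Ω(x)/8)`, `B_{x'} = B(x', d_Ω(x')/8)` satisfy `2B_{x'} ∩ B_x ≠ ∅`,
the averages satisfy `|w_{B_x} - w_{B_{x'}}| ≤ δ w_{B_x}`. -/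
def DeltaRegularizable {X : Type*} [MetricSpace X] [MeasurableSpace X]
    (μ : Measure X) (Ω : Set X) (w : X → ℝ) (δ : ℝ) : Prop :=
  ∀ x ∈ Ω, ∀ x' ∈ Ω,
    (ball x' (2 * (infDist x' Ωᶜ / 8)) ∩ ball x (infDist x Ωᶜ / 8)).Nonempty →
    |(⨍ y in ball x (infDist x Ωᶜ / 8), w y ∂μ) -
        ⨍ y in ball x' (infDist x' Ωᶜ / 8), w y ∂μ| ≤
      δ * ⨍ y in ball x (infDist x Ωᶜ / 8), w y ∂μ

/-- Lipschitz estimate for the discrete convolution of a `δ`-regularizable weight: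
given a Whitney cover `{B_i = B(x_i,r_i)}` of `Ω` with `r_i = d_Ω(x_i)/8`, overlap bound
`N` for the balls `6B_i`, and an associated partition of unity `{φ_i}` with Lipschitz
constants `L/r_i`, there is `C₀ ≥ 1`, depending only on `N` and `L`, such that for every
`δ`-regularizable weight `w` (integrable on each `B_i`), the discrete convolution
`w̃ = Σ_i w_{B_i} φ_i` is Lipschitz on each `B_i` with constant `C₀ δ w_{B_i}/r_i`. -/
theorem discrete_convolution_lipschitz_on_whitney_balls :
    ∃ C₀ : ℝ → ℝ → ℝ,
      ∀ N L : ℝ, 1 ≤ N → 1 ≤ L →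
        1 ≤ C₀ N L ∧
        ∀ (X : Type) [MetricSpace X] [MeasurableSpace X] (μ : Measure X) (Cμ : ℝ),
          1 ≤ Cμ → IsDoublingWith μ Cμ →
          ∀ Ω : Set X, IsOpen Ω → Ωᶜ.Nonempty →
          ∀ (x : ℕ → X) (r : ℕ → ℝ),
            (∀ i, r i = infDist (x i) Ωᶜ / 8) →
            Ω = ⋃ i, ball (x i) (r i) →
            (∀ y : X, {i : ℕ | y ∈ ball (x i) (6 * r i)}.Finite ∧
              (({i : ℕ | y ∈ ball (x i) (6 * r i)}).ncard : ℝ) ≤ N) →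
          ∀ φ : ℕ → X → ℝ,
            (∀ i, ∀ a b : X, |φ i a - φ i b| ≤ L / r i * dist a b) →
            (∀ i a, 0 ≤ φ i a) → (∀ i a, φ i a ≤ 1) →
            (∀ i, ∀ a ∉ ball (x i) (2 * r i), φ i a = 0) →
            (∀ a ∈ Ω, HasSum (fun i => φ i a) 1) →
          ∀ (δ : ℝ) (w : X → ℝ), 0 < δ → (∀ a, 0 ≤ w a) →
            DeltaRegularizable μ Ω w δ →
            (∀ i, IntegrableOn w (ball (x i) (r i)) μ) →
            ∀ i, ∀ a ∈ ball (x i) (r i), ∀ b ∈ ball (x i) (r i),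
              |(∑' j, (⨍ y in ball (x j) (r j), w y ∂μ) * φ j a) -
                  ∑' j, (⨍ y in ball (x j) (r j), w y ∂μ) * φ j b| ≤
                C₀ N L * δ * (⨍ y in ball (x i) (r i), w y ∂μ) / r i * dist a b := by
  refine ⟨fun N L => 4 * N * L, ?_⟩
  intro N L hN hL
  refine ⟨by nlinarith, ?_⟩
  intro X _ _ μ Cμ _ _ Ω hΩ hΩc x r hr hcov hov φ hLip hφ0 hφ1 hsupp hsum δ w hδ hw hreg _ i a ha b hb
  have hrpos : ∀ j, 0 < r j → x j ∈ Ω := by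
    intro j hj
    by_contra h
    have := infDist_zero_of_mem (s := Ωᶜ) (x := x j) h
    rw [hr j, this] at hj
    norm_num at hj
  have hri : 0 < r i := pos_of_mem_ball ha
  have haΩ : a ∈ Ω := by rw [hcov]; exact mem_iUnion.2 ⟨i, ha⟩
  have hbΩ : b ∈ Ω := by rw [hcov]; exact mem_iUnion.2 ⟨i, hb⟩
  set W : ℕ → ℝ := fun j => ⨍ y in ball (x j) (r j), w y ∂μ with hW
  have hkey : ∀ j, ∀ z ∈ ball (x i) (r i), z ∈ ball (x j) (2 * r j) →
      0 < r j ∧ r i ≤ 2 * r j ∧ |W i - W j| ≤ δ * W i := by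
    intro j z hz hzj
    have hj : 0 < r j := by
      have := pos_of_mem_ball hzj
      linarith
    refine ⟨hj, ?_, ?_⟩
    · have h1 := infDist_le_infDist_add_dist (s := Ωᶜ) (x := x i) (y := x j)
      have h2 := dist_triangle_left (x i) (x j) z
      rw [mem_ball] at hz hzj
      have h3 := hr i
      have h4 := hr j
      linarith
    · have := hreg (x i) (hrpos i hri) (x j) (hrpos j hj)
      rw [← hr i, ← hr j] at this
      exact this ⟨z, hzj, hz⟩
  have hWi : 0 ≤ δ * W i :=
    (abs_nonneg _).trans (hkey i a ha (ball_subset_ball (by linarith) ha)).2.2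
  obtain ⟨hfa, hca⟩ := hov a
  obtain ⟨hfb, hcb⟩ := hov b
  classical
  set S : Finset ℕ := hfa.toFinset ∪ hfb.toFinset with hS
  have hcard : (S.card : ℝ) ≤ 2 * N := by
    rw [ncard_eq_toFinset_card _ hfa] at hca
    rw [ncard_eq_toFinset_card _ hfb] at hcb
    have h : (S.card : ℝ) ≤ (hfa.toFinset.card : ℝ) + hfb.toFinset.card := by
      exact_mod_cast Finset.card_union_le _ _
    linarith
  have h26 : ∀ j z, z ∈ ball (x j) (2 * r j) → z ∈ ball (x j) (6 * r j) := by
    intro j z hz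
    have := pos_of_mem_ball hz
    exact ball_subset_ball (by linarith) hz
  have hza : ∀ j ∉ S, φ j a = 0 := by
    intro j hj
    refine hsupp j a fun h => hj ?_
    rw [hS, Finset.mem_union]
    left
    simpa using h26 j a h
  have hzb : ∀ j ∉ S, φ j b = 0 := by
    intro j hj
    refine hsupp j b fun h => hj ?_
    rw [hS, Finset.mem_union]
    right
    simpa using h26 j b h
  have hsa : ∑ j ∈ S, φ j a = 1 := (hasSum_sum_of_ne_finset_zero hza).unique (hsum a haΩ)
  have hsb : ∑ j ∈ S, φ j b = 1 := (hasSum_sum_of_ne_finset_zero hzb).unique (hsum b hbΩ)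
  change |(∑' j, W j * φ j a) - ∑' j, W j * φ j b| ≤ 4 * N * L * δ * W i / r i * dist a b
  rw [tsum_eq_sum (s := S) (fun j hj => by rw [hza j hj, mul_zero]),
    tsum_eq_sum (s := S) (fun j hj => by rw [hzb j hj, mul_zero])]
  have heq : ∑ j ∈ S, W j * φ j a - ∑ j ∈ S, W j * φ j b
      = ∑ j ∈ S, (W j - W i) * (φ j a - φ j b) := by
    have h : ∑ j ∈ S, (W j - W i) * (φ j a - φ j b)
        = ∑ j ∈ S, W j * φ j a - ∑ j ∈ S, W j * φ j b
          - W i * (∑ j ∈ S, φ j a - ∑ j ∈ S, φ j b) := by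
      simp only [← Finset.sum_sub_distrib, Finset.mul_sum]
      exact Finset.sum_congr rfl fun j _ => by ring
    rw [h, hsa, hsb]
    ring
  have hK : 0 ≤ δ * W i * (2 * L / r i * dist a b) := by positivity
  have hterm : ∀ j ∈ S, |(W j - W i) * (φ j a - φ j b)| ≤ δ * W i * (2 * L / r i * dist a b) := by
    intro j _
    by_cases hj : ∃ z ∈ ball (x i) (r i), z ∈ ball (x j) (2 * r j)
    · obtain ⟨z, hz, hzj⟩ := hj
      obtain ⟨h1, h2, h3⟩ := hkey j z hz hzj
      rw [abs_mul, abs_sub_comm (W j)]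
      refine mul_le_mul h3 ((hLip j a b).trans ?_) (abs_nonneg _) hWi
      refine mul_le_mul_of_nonneg_right ?_ dist_nonneg
      rw [div_le_div_iff₀ h1 hri]
      nlinarith
    · have h1 : φ j a = 0 := hsupp j a fun h => hj ⟨a, ha, h⟩
      have h2 : φ j b = 0 := hsupp j b fun h => hj ⟨b, hb, h⟩
      rw [h1, h2]
      simpa using hK
  rw [heq]
  calc |∑ j ∈ S, (W j - W i) * (φ j a - φ j b)|
      ≤ ∑ j ∈ S, |(W j - W i) * (φ j a - φ j b)| := Finset.abs_sum_le_sum_abs _ _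
    _ ≤ S.card • (δ * W i * (2 * L / r i * dist a b)) := Finset.sum_le_card_nsmul _ _ _ hterm
    _ = S.card * (δ * W i * (2 * L / r i * dist a b)) := by rw [nsmul_eq_mul]
    _ ≤ 2 * N * (δ * W i * (2 * L / r i * dist a b)) := mul_le_mul_of_nonneg_right hcard hK
    _ = 4 * N * L * δ * W i / r i * dist a b := by ring
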